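/- arXiv:1101.4821 — 3 statements merged into one kernel-verified Lean document; each statement's English description precedes it below -/
import Mathlib

section
/- If (Γ, w) is a stable weighted graph and S ⊆ E(Γ), then the weighted contraction (Γ/S, w/S) is stable. -/
/-!
Stability of `(Γ, w)` is equivalent to the single inequality `3 ≤ val v + 2 w(v)` at every
vertex `v` (`stable_iff`).  Let `x` be a vertex of `Γ/S` whose fiber has `k ≥ 1` vertices and
`e` edges.  The half-edges based in the fiber are those of its `e` edges together with those based
at `x`, so `val x ≥ ∑ val v - 2e` (`card_fiber_H_add_valence`, `card_H_le`), while
`b₁ ≥ e + 1 - k` since the fiber has at least one component (`numEdges_lt`).  Summing the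
inequality over the fiber gives
`val x + 2 (b₁ + ∑ w v) ≥ ∑ (val v + 2 w v) - 2k + 2 ≥ 3k - 2k + 2 = k + 2 ≥ 3`.
-/

open scoped ENNReal NNReal Classical

/-- A combinatorial graph with `n` labeled legs: a finite nonempty set `V` of vertices, a
finite set `H` of half-edges, an involution `ι` on `H` whose fixed points are exactly the
`n` labeled legs, and an endpoint map `ε : H → V`.  Edges are the pairs `{h, ι h}` with
`ι h ≠ h`. -/
structure LeggedGraph (n : ℕ) where
  V : Type
  H : Type
  finV : Finite V
  finH : Finite H
  neV : Nonempty V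
  ι : H → H
  ι_invol : ∀ h, ι (ι h) = h
  ε : H → V
  leg : Fin n → H
  leg_fix : ∀ i, ι (leg i) = leg i
  leg_inj : Function.Injective leg
  fix_leg : ∀ h, ι h = h → ∃ i, leg i = h

attribute [instance] LeggedGraph.finV LeggedGraph.finH LeggedGraph.neV

namespace LeggedGraph

variable {n : ℕ}

/-- The type of edges of `G`: unordered pairs `{h, ι h}` with `ι h ≠ h`. -/
def Edge (G : LeggedGraph n) : Type :=
  Quot (fun h h' : {h : G.H // G.ι h ≠ h} => (h' : G.H) = G.ι (h : G.H))

/-- The edge determined by a non-fixed half-edge. -/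
def edgeMk (G : LeggedGraph n) (h : G.H) (hne : G.ι h ≠ h) : G.Edge := Quot.mk _ ⟨h, hne⟩

/-- The number of edges of `G`. -/
noncomputable def numEdges (G : LeggedGraph n) : ℕ := Nat.card G.Edge

/-- Two vertices are adjacent if they are the two endpoints of some edge. -/
def adjRel (G : LeggedGraph n) : G.V → G.V → Prop := fun v v' =>
  ∃ h, G.ι h ≠ h ∧ G.ε h = v ∧ G.ε (G.ι h) = v'

/-- The number of connected components of `G`. -/
noncomputable def numComps (G : LeggedGraph n) : ℕ := Nat.card (Quot G.adjRel)

/-- `G` is connected: any two vertices can be joined by an edge path. -/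
def IsConnected (G : LeggedGraph n) : Prop := ∀ v v' : G.V, Relation.EqvGen G.adjRel v v'

/-- The first Betti number `b₁(G) = |E(G)| − |V(G)| + c`, where `c` is the number of
connected components (stated as `|E(G)| + c − |V(G)|`, a natural number). -/
noncomputable def b1 (G : LeggedGraph n) : ℕ := G.numEdges + G.numComps - Nat.card G.V

/-- The valence of a vertex: the number of half-edges based at it (a loop counts twice,
legs count once). -/
noncomputable def valence (G : LeggedGraph n) (v : G.V) : ℕ := Nat.card {h : G.H // G.ε h = v}

/-- `G` is 3-regular if every vertex has valence `3`. -/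
def ThreeRegular (G : LeggedGraph n) : Prop := ∀ v, G.valence v = 3

/-- The genus of the weighted graph `(G, w)`: `b₁(G) + Σ_v w(v)`. -/
noncomputable def genus (G : LeggedGraph n) (w : G.V → ℕ) : ℕ := G.b1 + ∑ᶠ v, w v

/-- Stability of a weighted graph: every vertex of weight `0` has valence at least `3` and
every vertex of weight `1` has valence at least `1`. -/
def Stable (G : LeggedGraph n) (w : G.V → ℕ) : Prop :=
  ∀ v, (w v = 0 → 3 ≤ G.valence v) ∧ (w v = 1 → 1 ≤ G.valence v)

/-- The set of half-edges of the edges meeting a set `S` of half-edges: this is the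
set of half-edges of the edge set determined by `S` (legs and fixed half-edges are
discarded, and the set is closed under the involution). -/
def sym (G : LeggedGraph n) (S : Set G.H) : Set G.H :=
  {h | (h ∈ S ∨ G.ι h ∈ S) ∧ G.ι h ≠ h}

theorem sym_iota_mem {G : LeggedGraph n} {S : Set G.H} {h : G.H} (hh : h ∈ G.sym S) :
    G.ι h ∈ G.sym S := by
  obtain ⟨h1, h2⟩ := hh
  constructor
  · rcases h1 with h1 | h1
    · right; rwa [G.ι_invol]
    · left; exact h1
  · rw [G.ι_invol]
    exact fun e => h2 e.symm

theorem sym_iota_not_mem {G : LeggedGraph n} {S : Set G.H} {h : G.H} (hh : h ∉ G.sym S) :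
    G.ι h ∉ G.sym S := fun hc => by
  have h2 := sym_iota_mem hc
  rw [G.ι_invol] at h2
  exact hh h2

/-- The relation identifying the two endpoints of every edge in `S`. -/
def contrRel (G : LeggedGraph n) (S : Set G.H) : G.V → G.V → Prop := fun v v' =>
  ∃ h ∈ G.sym S, G.ε h = v ∧ G.ε (G.ι h) = v'

/-- The contraction `Γ/S` of the set of edges `S`: its vertices are the connected
components of the graph obtained by removing all edges not in `S`, its half-edges are the
half-edges not belonging to `S`, and legs are kept. -/
def contract (G : LeggedGraph n) (S : Set G.H) : LeggedGraph n where
  V := Quot (G.contrRel S)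
  H := {h : G.H // h ∉ G.sym S}
  finV := inferInstance
  finH := inferInstance
  neV := G.neV.map (Quot.mk _)
  ι := fun h => ⟨G.ι h.1, sym_iota_not_mem h.2⟩
  ι_invol := fun h => Subtype.ext (G.ι_invol h.1)
  ε := fun h => Quot.mk _ (G.ε h.1)
  leg := fun i => ⟨G.leg i, fun hc => hc.2 (G.leg_fix i)⟩
  leg_fix := fun i => Subtype.ext (G.leg_fix i)
  leg_inj := fun i j hij => G.leg_inj (congrArg Subtype.val hij)
  fix_leg := fun h hh => by
    obtain ⟨i, hi⟩ := G.fix_leg h.1 (congrArg Subtype.val hh)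
    exact ⟨i, Subtype.ext hi⟩

/-- The graph `Γ − T` obtained from `G` by keeping only the edges in `S` (and keeping all
vertices and all legs). -/
def restrict (G : LeggedGraph n) (S : Set G.H) : LeggedGraph n where
  V := G.V
  H := {h : G.H // h ∈ G.sym S ∨ ∃ i, G.leg i = h}
  finV := G.finV
  finH := inferInstance
  neV := G.neV
  ι := fun h => ⟨G.ι h.1, by
    rcases h.2 with hm | ⟨i, hi⟩
    · exact Or.inl (sym_iota_mem hm)
    · refine Or.inr ⟨i, ?_⟩
      rw [← hi]
      exact (G.leg_fix i).symm⟩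
  ι_invol := fun h => Subtype.ext (G.ι_invol h.1)
  ε := fun h => G.ε h.1
  leg := fun i => ⟨G.leg i, Or.inr ⟨i, rfl⟩⟩
  leg_fix := fun i => Subtype.ext (G.leg_fix i)
  leg_inj := fun i j hij => G.leg_inj (congrArg Subtype.val hij)
  fix_leg := fun h hh => by
    rcases h.2 with hm | ⟨i, hi⟩
    · exact absurd (congrArg Subtype.val hh) hm.2
    · exact ⟨i, Subtype.ext hi⟩

/-- The subgraph of `Γ − T` lying over a vertex `x` of the contraction `Γ/S`
(the fiber `σ⁻¹(x)` of the contraction map `σ`), viewed as a graph without legs. -/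
def fiber (G : LeggedGraph n) (S : Set G.H) (x : Quot (G.contrRel S)) : LeggedGraph 0 where
  V := {v : G.V // Quot.mk (G.contrRel S) v = x}
  H := {h : G.H // h ∈ G.sym S ∧ Quot.mk (G.contrRel S) (G.ε h) = x}
  finV := inferInstance
  finH := inferInstance
  neV := by
    obtain ⟨v, hv⟩ := Quot.exists_rep x
    exact ⟨⟨v, hv⟩⟩
  ι := fun h => ⟨G.ι h.1, sym_iota_mem h.2.1, by
    have h2 : Quot.mk (G.contrRel S) (G.ε h.1) = Quot.mk (G.contrRel S) (G.ε (G.ι h.1)) :=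
      Quot.sound ⟨h.1, h.2.1, rfl, rfl⟩
    rw [← h2]
    exact h.2.2⟩
  ι_invol := fun h => Subtype.ext (G.ι_invol h.1)
  ε := fun h => ⟨G.ε h.1, h.2.2⟩
  leg := Fin.elim0
  leg_fix := fun i => i.elim0
  leg_inj := fun i => i.elim0
  fix_leg := fun h hh => absurd (congrArg Subtype.val hh) h.2.1.2

/-- The weight function `w/S` of the weighted contraction of `(G, w)`:
`w/S(x) = b₁(σ⁻¹(x)) + Σ_{v ∈ σ⁻¹(x)} w(v)`. -/
noncomputable def wcontract (G : LeggedGraph n) (w : G.V → ℕ) (S : Set G.H) :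
    (G.contract S).V → ℕ := fun x =>
  (G.fiber S x).b1 + ∑ᶠ v : {v : G.V // Quot.mk (G.contrRel S) v = x}, w v.1

/-- Isomorphism of graphs with `n` labeled legs. -/
def GIso (G G' : LeggedGraph n) : Prop :=
  ∃ (fV : G.V ≃ G'.V) (fH : G.H ≃ G'.H),
    (∀ h, fH (G.ι h) = G'.ι (fH h)) ∧
    (∀ h, fV (G.ε h) = G'.ε (fH h)) ∧
    (∀ i, fH (G.leg i) = G'.leg i)

/-- Isomorphism of weighted graphs with `n` labeled legs. -/
def WIso (G : LeggedGraph n) (w : G.V → ℕ) (G' : LeggedGraph n) (w' : G'.V → ℕ) : Prop :=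
  ∃ (fV : G.V ≃ G'.V) (fH : G.H ≃ G'.H),
    (∀ h, fH (G.ι h) = G'.ι (fH h)) ∧
    (∀ h, fV (G.ε h) = G'.ε (fH h)) ∧
    (∀ i, fH (G.leg i) = G'.leg i) ∧
    (∀ v, w' (fV v) = w v)

/-- Isomorphism of metric weighted graphs with `n` labeled legs (lengths take values in
`ℝ≥0 ∪ {∞}`, realized as `ℝ≥0∞`). -/
def MIso (G : LeggedGraph n) (w : G.V → ℕ) (l : G.H → ℝ≥0∞)
    (G' : LeggedGraph n) (w' : G'.V → ℕ) (l' : G'.H → ℝ≥0∞) : Prop :=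
  ∃ (fV : G.V ≃ G'.V) (fH : G.H ≃ G'.H),
    (∀ h, fH (G.ι h) = G'.ι (fH h)) ∧
    (∀ h, fV (G.ε h) = G'.ε (fH h)) ∧
    (∀ i, fH (G.leg i) = G'.leg i) ∧
    (∀ v, w' (fV v) = w v) ∧
    (∀ h, l' (fH h) = l h)

/-- `G'` is obtained from `G` by contracting exactly one edge, which is not a loop. -/
def OneEdgeContr (G G' : LeggedGraph n) : Prop :=
  ∃ h₀ : G.H, G.ι h₀ ≠ h₀ ∧ G.ε (G.ι h₀) ≠ G.ε h₀ ∧ GIso (G.contract {h₀}) G'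

/-- `(G', w')` is obtained from `(G, w)` by the weighted contraction of exactly one edge. -/
def OneEdgeWContr (G : LeggedGraph n) (w : G.V → ℕ) (G' : LeggedGraph n)
    (w' : G'.V → ℕ) : Prop :=
  ∃ h₀ : G.H, G.ι h₀ ≠ h₀ ∧ WIso (G.contract {h₀}) (G.wcontract w {h₀}) G' w'

/-- The set of half-edges of the edges given length `0` by a point `p` of the cone. -/
def zeroSet (G : LeggedGraph n) (p : G.Edge → ℝ≥0∞) : Set G.H :=
  {h | ∃ hne : G.ι h ≠ h, p (G.edgeMk h hne) = 0}

/-- The length function of the metric weighted graph associated to a point `p` of the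
cone: each surviving edge `e` gets length `p e`, and each leg gets length `∞`. -/
noncomputable def assocLen (G : LeggedGraph n) (p : G.Edge → ℝ≥0∞)
    (h : {h : G.H // h ∉ G.sym (G.zeroSet p)}) : ℝ≥0∞ :=
  if hne : G.ι h.1 = h.1 then ⊤ else p (G.edgeMk h.1 hne)

/-- `p ∼ q`: the metric weighted graphs associated to the points `p` and `q` are
isomorphic. -/
def ptRel (G : LeggedGraph n) (w : G.V → ℕ) (p q : G.Edge → ℝ≥0∞) : Prop :=
  MIso (G.contract (G.zeroSet p)) (G.wcontract w (G.zeroSet p)) (G.assocLen p)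
       (G.contract (G.zeroSet q)) (G.wcontract w (G.zeroSet q)) (G.assocLen q)

/-- The equivalence on the closed cone `ℝ≥0^E`. -/
def ptRelNN (G : LeggedGraph n) (w : G.V → ℕ) (p q : G.Edge → ℝ≥0) : Prop :=
  G.ptRel w (fun e => (p e : ℝ≥0∞)) (fun e => (q e : ℝ≥0∞))

end LeggedGraph

open LeggedGraph

namespace LeggedGraph

variable {n : ℕ}

theorem stable_iff (G : LeggedGraph n) (w : G.V → ℕ) :
    G.Stable w ↔ ∀ v, 3 ≤ G.valence v + 2 * w v := by
  refine forall_congr' fun v => ?_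
  omega

/-- In a graph without legs every half-edge belongs to an edge, and an edge has at most two
half-edges. -/
theorem card_H_le (G : LeggedGraph 0) : Nat.card G.H ≤ 2 * G.numEdges := by
  have hne : ∀ h, G.ι h ≠ h := fun h hh => (G.fix_leg h hh).elim fun i _ => i.elim0
  -- the set `{h, ι h}` depends only on the edge of `h`
  let pair : G.Edge → Set G.H := Quot.lift (fun h => {h.1, G.ι h.1}) (by
    intro a b hab
    rw [hab, G.ι_invol, Set.pair_comm])
  have hpair : ∀ a b, G.edgeMk a (hne a) = G.edgeMk b (hne b) → a = b ∨ a = G.ι b := by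
    intro a b hab
    have ha : a ∈ pair (G.edgeMk a (hne a)) := Or.inl rfl
    rw [hab] at ha
    exact ha
  have : Finite G.Edge := inferInstanceAs (Finite (Quot _))
  have := Fintype.ofFinite G.Edge
  have := Fintype.ofFinite G.H
  rw [numEdges, Nat.card_eq_fintype_card, Nat.card_eq_fintype_card, ← Finset.card_univ,
    ← Finset.card_univ]
  refine Finset.card_le_mul_card_image_of_maps_to
    (f := fun h => G.edgeMk h (hne h)) (fun _ _ => Finset.mem_univ _) 2 fun q _ => ?_
  by_contra! hlt
  obtain ⟨b, hb⟩ := Finset.card_pos.mp (lt_trans Nat.two_pos hlt)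
  have hb' := (Finset.mem_filter.mp hb).2
  refine absurd (Finset.card_le_card (t := {b, G.ι b}) fun a ha => ?_)
    (not_le.mpr (lt_of_le_of_lt Finset.card_le_two hlt))
  have ha' := (Finset.mem_filter.mp ha).2
  simpa using hpair a b (ha'.trans hb'.symm)

theorem numEdges_lt (G : LeggedGraph n) : G.numEdges < G.b1 + Nat.card G.V := by
  have : Nonempty (Quot G.adjRel) := G.neV.map (Quot.mk _)
  have h : 0 < G.numComps := Nat.card_pos
  unfold b1
  omega

/-- The half-edges based in the fiber over `x` are either half-edges of the fiber or survive as
half-edges based at `x`. -/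
theorem card_fiber_H_add_valence (G : LeggedGraph n) (S : Set G.H) (x : (G.contract S).V)
    [Fintype (G.fiber S x).V] :
    Nat.card (G.fiber S x).H + (G.contract S).valence x =
      ∑ v : (G.fiber S x).V, G.valence v.1 := by
  let P : G.H → Prop := fun h => Quot.mk (G.contrRel S) (G.ε h) = x
  have e1 : (Σ v : (G.fiber S x).V, {h : G.H // G.ε h = v.1}) ≃ {h : G.H // P h} :=
    { toFun := fun p => ⟨p.2.1, (congrArg (Quot.mk _) p.2.2).trans p.1.2⟩
      invFun := fun h => ⟨⟨G.ε h.1, h.2⟩, ⟨h.1, rfl⟩⟩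
      left_inv := by
        rintro ⟨⟨v, hv⟩, ⟨h, hh⟩⟩
        change G.ε h = v at hh
        subst hh
        rfl
      right_inv := fun h => rfl }
  have e2 : {h : G.H // P h} ≃ (G.fiber S x).H ⊕ {h : (G.contract S).H // (G.contract S).ε h = x} :=
    { toFun := fun h => if hs : h.1 ∈ G.sym S then Sum.inl ⟨h.1, hs, h.2⟩
        else Sum.inr ⟨⟨h.1, hs⟩, h.2⟩
      invFun := Sum.elim (fun h => ⟨h.1, h.2.2⟩) (fun h => ⟨h.1.1, h.2⟩)
      left_inv := by
        intro h
        by_cases hs : h.1 ∈ G.sym S <;> simp only [hs, dite_true, dite_false] <;> rfl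
      right_inv := by
        rintro (h | h)
        · exact dif_pos h.2.1
        · exact dif_neg h.1.2 }
  unfold valence
  rw [← Nat.card_sum, ← Nat.card_congr e2, ← Nat.card_congr e1, Nat.card_sigma]

end LeggedGraph

theorem stmt_3 (n : ℕ) (G : LeggedGraph n) (w : G.V → ℕ) (S : Set G.H)
    (hstab : G.Stable w) : (G.contract S).Stable (G.wcontract w S) := by
  rw [stable_iff] at hstab ⊢
  intro x
  have : Fintype (G.fiber S x).V := Fintype.ofFinite _
  have hval := card_fiber_H_add_valence G S x
  have hH := card_H_le (G.fiber S x)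
  have hE := numEdges_lt (G.fiber S x)
  have hV : 0 < Nat.card (G.fiber S x).V := Nat.card_pos
  have hw : G.wcontract w S x = (G.fiber S x).b1 + ∑ v : (G.fiber S x).V, w v.1 :=
    congrArg _ (finsum_eq_sum_of_fintype (fun v : (G.fiber S x).V => w v.1))
  have hsum : Nat.card (G.fiber S x).V * 3 ≤
      ∑ v : (G.fiber S x).V, (G.valence v.1 + 2 * w v.1) := by
    rw [Nat.card_eq_fintype_card, ← Finset.card_univ, ← smul_eq_mul]
    exact Finset.card_nsmul_le_sum _ _ _ fun v _ => hstab v.1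
  rw [Finset.sum_add_distrib, ← Finset.mul_sum] at hsum
  omega
end

section
/- Let (Γ, w) be a connected stable weighted graph of genus g with n legs. Then |E(Γ)| ≤ 3g − 3 + n, and equality holds if and only if Γ is 3-regular and b₁(Γ) = g (equivalently, w is identically zero). -/
/-!
For a connected graph the genus is `g = |E| - |V| + 1 + ∑ w(v)`, and counting half-edges by
their endpoint gives `∑ val(v) = 2|E| + n`. Eliminating `|V|`,

  `3g - 3 + n - |E| = ∑ (val(v) + 3 w(v) - 3)`.

Stability makes every summand nonnegative, with equality only if `w(v) = 0` and `val(v) = 3`: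
a vertex of positive weight contributes at least `1`. Hence the inequality and its equality
case.

The half-edge count is `sum_valence`. Since `b1` is a truncated difference, its value for a
connected graph (`b1_eq`) also needs `|V| ≤ |E| + 1`, which comes from the corresponding fact
for the simple graph underlying `G` (`card_V_le`).
-/

/-! ### Graphs with legs -/

open scoped ENNReal NNReal Classical

open LeggedGraph

/-! ### Counting half-edges -/

namespace LeggedGraph

/-- The unordered pair of half-edges forming an edge. -/
def edgeHalves {n : ℕ} (G : LeggedGraph n) : G.Edge → Sym2 G.H :=
  Quot.lift (fun h => s(h.1, G.ι h.1)) (by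
    rintro ⟨a, ha⟩ ⟨b, hb⟩ hab
    simp only at hab
    subst hab
    simp only [G.ι_invol]
    exact Sym2.eq_swap)

instance finEdge {n : ℕ} (G : LeggedGraph n) : Finite G.Edge :=
  Finite.of_surjective (Quot.mk _) Quot.mk_surjective

theorem edgeMk_eq_iff {n : ℕ} (G : LeggedGraph n) (a b : G.H) (ha : G.ι a ≠ a)
    (hb : G.ι b ≠ b) : G.edgeMk a ha = G.edgeMk b hb ↔ a = b ∨ a = G.ι b := by
  constructor
  · intro h
    have h2 : s(a, G.ι a) = s(b, G.ι b) := congrArg G.edgeHalves h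
    rw [Sym2.eq_iff] at h2
    tauto
  · rintro (h | h)
    · subst h; rfl
    · exact (Quot.sound (r := fun h h' : {h : G.H // G.ι h ≠ h} => (h' : G.H) = G.ι (h : G.H))
        (a := ⟨b, hb⟩) (b := ⟨a, ha⟩) h).symm

theorem card_nonfixed {n : ℕ} (G : LeggedGraph n) :
    Nat.card {h : G.H // G.ι h ≠ h} = 2 * G.numEdges := by
  let f : {h : G.H // G.ι h ≠ h} → G.Edge := fun h => G.edgeMk h.1 h.2
  have hf : ∀ e, Nat.card {h // f h = e} = 2 := by
    intro e
    obtain ⟨⟨a, ha⟩, rfl⟩ := Quot.exists_rep e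
    have ha' : G.ι (G.ι a) ≠ G.ι a := by rw [G.ι_invol]; exact ha.symm
    have hset : {h | f h = Quot.mk _ ⟨a, ha⟩}
        = {(⟨a, ha⟩ : {h : G.H // G.ι h ≠ h}), ⟨G.ι a, ha'⟩} := by
      ext ⟨b, hb⟩
      simp only [Set.mem_ofPred_eq, Set.mem_insert_iff, Set.mem_singleton_iff, Subtype.mk.injEq]
      exact edgeMk_eq_iff G b a hb ha
    have h2 : Nat.card {h // f h = Quot.mk _ ⟨a, ha⟩}
        = Set.ncard {h | f h = Quot.mk _ ⟨a, ha⟩} := rfl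
    rw [h2, hset, Set.ncard_pair]
    intro h
    exact ha (congrArg Subtype.val h).symm
  have : Fintype G.Edge := Fintype.ofFinite _
  rw [← Nat.card_congr (Equiv.sigmaFiberEquiv f), Nat.card_sigma]
  simp [hf, numEdges, mul_comm]

theorem card_H {n : ℕ} (G : LeggedGraph n) : Nat.card G.H = 2 * G.numEdges + n := by
  have hl : Nat.card {h : G.H // G.ι h = h} = n := by
    let f : Fin n → {h : G.H // G.ι h = h} := fun i => ⟨G.leg i, G.leg_fix i⟩
    have hf : Function.Bijective f := by
      refine ⟨fun i j h => G.leg_inj (congrArg Subtype.val h), ?_⟩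
      rintro ⟨h, hh⟩
      obtain ⟨i, hi⟩ := G.fix_leg h hh
      exact ⟨i, Subtype.ext hi⟩
    rw [← Nat.card_congr (Equiv.ofBijective f hf), Nat.card_fin]
  rw [← Nat.card_congr (Equiv.sumCompl (fun h : G.H => G.ι h = h)), Nat.card_sum, hl,
    ← card_nonfixed, add_comm]

theorem sum_valence {n : ℕ} (G : LeggedGraph n) [Fintype G.V] :
    ∑ v, G.valence v = 2 * G.numEdges + n := by
  rw [← card_H, ← Nat.card_congr (Equiv.sigmaFiberEquiv G.ε), Nat.card_sigma]
  rfl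

/-! ### The first Betti number of a connected graph -/

/-- A connected graph has at least `|V| - 1` edges: every edge of the underlying simple graph
is the pair of endpoints of an edge of `G`. -/
theorem card_V_le {n : ℕ} (G : LeggedGraph n) (hc : G.IsConnected) :
    Nat.card G.V ≤ G.numEdges + 1 := by
  let S : SimpleGraph G.V := SimpleGraph.fromRel G.adjRel
  have hS : S.Connected := by
    refine { preconnected := fun v v' => ?_, nonempty := G.neV }
    induction hc v v' with
    | rel x y h =>
      by_cases hxy : x = y
      · subst hxy; exact SimpleGraph.Reachable.refl _
      · exact SimpleGraph.Adj.reachable ((SimpleGraph.fromRel_adj _ _ _).2 ⟨hxy, Or.inl h⟩)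
    | refl x => exact SimpleGraph.Reachable.refl _
    | symm x y _ ih => exact ih.symm
    | trans x y z _ _ ih1 ih2 => exact ih1.trans ih2
  refine hS.card_vert_le_card_edgeSet_add_one.trans (Nat.add_le_add_right ?_ 1)
  have hsub : S.edgeSet ⊆ Set.range (fun e : G.Edge => (G.edgeHalves e).map G.ε) := by
    intro e
    induction e using Sym2.ind with
    | _ x y =>
      intro h
      obtain ⟨-, ⟨k, hne, rfl, rfl⟩ | ⟨k, hne, rfl, rfl⟩⟩ := (SimpleGraph.fromRel_adj _ _ _).1 h
      · exact ⟨G.edgeMk k hne, rfl⟩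
      · exact ⟨G.edgeMk k hne, Sym2.eq_swap⟩
  exact (Nat.card_mono (Set.toFinite _) hsub).trans (Finite.card_range_le _)

theorem b1_eq {n : ℕ} (G : LeggedGraph n) (hc : G.IsConnected) :
    G.b1 + Nat.card G.V = G.numEdges + 1 := by
  have h1 : G.numComps = 1 := by
    refine Nat.card_eq_one_iff_unique.2 ⟨⟨?_⟩, G.neV.map (Quot.mk _)⟩
    rintro ⟨v⟩ ⟨v'⟩
    exact Quot.eqvGen_sound (hc v v')
  have := card_V_le G hc
  unfold b1
  omega

end LeggedGraph

/-! ### The bound on the number of edges -/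

theorem stmt_4 (g n : ℕ) (G : LeggedGraph n) (w : G.V → ℕ)
    (hconn : G.IsConnected) (hstab : G.Stable w) (hgen : G.genus w = g) :
    (G.numEdges : ℤ) ≤ 3 * g - 3 + n ∧
    (((G.numEdges : ℤ) = 3 * g - 3 + n) ↔ (G.ThreeRegular ∧ G.b1 = g)) ∧
    (((G.numEdges : ℤ) = 3 * g - 3 + n) → ∀ v, w v = 0) := by
  have : Fintype G.V := Fintype.ofFinite _
  have hb := b1_eq G hconn
  have hv := sum_valence G
  unfold genus at hgen
  rw [finsum_eq_sum_of_fintype] at hgen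
  have hpos : ∀ v, (0 : ℤ) ≤ G.valence v + 3 * w v - 3 := fun v => by
    have := hstab v
    omega
  have hsum : ∑ v, ((G.valence v : ℤ) + 3 * w v - 3) = 3 * g - 3 + n - G.numEdges := by
    rw [Finset.sum_sub_distrib, Finset.sum_add_distrib, ← Finset.mul_sum, ← Nat.cast_sum,
      ← Nat.cast_sum, hv, Finset.sum_const, Finset.card_univ, ← Nat.card_eq_fintype_card,
      nsmul_eq_mul]
    omega
  have hnn := Finset.sum_nonneg (s := Finset.univ) (fun v _ => hpos v)
  have key : (G.numEdges : ℤ) = 3 * g - 3 + n → ∀ v, w v = 0 ∧ G.valence v = 3 := by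
    intro h v
    have h0 : ∑ v, ((G.valence v : ℤ) + 3 * w v - 3) = 0 := by omega
    have := (Finset.sum_eq_zero_iff_of_nonneg (fun v _ => hpos v)).1 h0 v (Finset.mem_univ v)
    have := hstab v
    omega
  refine ⟨by omega, ⟨fun h => ⟨fun v => (key h v).2, ?_⟩, ?_⟩, fun h v => (key h v).1⟩
  · have : ∑ v, w v = 0 := Finset.sum_eq_zero fun v _ => (key h v).1
    omega
  · rintro ⟨h3, hbg⟩
    have hw : ∑ v, w v = 0 := by omega
    have hw' : ∀ v, w v = 0 := fun v => Finset.sum_eq_zero_iff.1 hw v (Finset.mem_univ v)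
    have h0 : ∑ v, ((G.valence v : ℤ) + 3 * w v - 3) = 0 :=
      Finset.sum_eq_zero fun v _ => by rw [h3 v, hw' v]; norm_num
    omega
end

section
/- Assume 2g − 2 + n ≥ 1. If two n-pointed weighted tropical curves of genus g both have stable underlying weighted graphs and are tropically equivalent, then they are isomorphic. Consequently, each tropical equivalence class contains a unique stable representative up to isomorphism. -/
/-!
The elementary moves form a confluent rewriting system, and stable curves are irreducible for it, so
two equivalent stable curves have a common reduct to which both are already isomorphic.

To treat the three moves uniformly, each leg is closed up by a specially tagged vertex at infinity
(`TropNet.curveNet`). Then every move is an instance of one operation, the elimination of an ordinary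
vertex of weight zero and valence at most two (`TropNet.elim`): its half-edges are discarded, and
an edge arriving at the vertex is concatenated with the edge leaving through the other half-edge.
Valence one is included, the edge simply losing its partner (`TropNet.step_of_move1`,
`TropNet.step_of_move2a`, `TropNet.step_of_move2b`). Valence zero and a loop at a vertex of valence
two are allowed as well: the vertex disappears, together with its loop. With these degenerate cases
included, eliminations of two different vertices commute on the nose (`TropNet.elim_comm`).

Commutation gives the diamond property up to isomorphism (`TropNet.Red.diamond`), and the
Church–Rosser theorem yields a common reduct of equivalent nets. The net of a stable curve has no
vertex to eliminate (`TropNet.not_step_of_stable`), and an isomorphism of nets restricts to an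
isomorphism of curves because the ends at infinity are tagged (`TropNet.iso_of_nIso`).
-/

open scoped ENNReal NNReal Classical

open LeggedGraph

/-- An `n`-pointed weighted tropical curve of genus `g`: a connected graph `Γ` with `n`
labeled legs, a weight function `w` with `b₁(Γ) + Σ w = g`, and a length function with
values in `ℝ≥0 ∪ {∞}` (legs have length `∞`, and an edge has length `∞` if and only if it
is adjacent to a `1`-valent vertex of weight `0`). -/
structure TropCurve (g n : ℕ) where
  Γ : LeggedGraph n
  conn : Γ.IsConnected
  w : Γ.V → ℕ
  genus_eq : Γ.genus w = g
  len : Γ.H → ℝ≥0∞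
  len_symm : ∀ h, len (Γ.ι h) = len h
  len_pos : ∀ h, 0 < len h
  len_top_iff : ∀ h, len h = ⊤ ↔
    (Γ.ι h = h ∨ (Γ.valence (Γ.ε h) = 1 ∧ w (Γ.ε h) = 0) ∨
      (Γ.valence (Γ.ε (Γ.ι h)) = 1 ∧ w (Γ.ε (Γ.ι h)) = 0))

namespace TropCurve

variable {g n : ℕ}

/-- Isomorphism of `n`-pointed weighted tropical curves. -/
def Iso (C C' : TropCurve g n) : Prop :=
  ∃ (fV : C.Γ.V ≃ C'.Γ.V) (fH : C.Γ.H ≃ C'.Γ.H),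
    (∀ h, fH (C.Γ.ι h) = C'.Γ.ι (fH h)) ∧
    (∀ h, fV (C.Γ.ε h) = C'.Γ.ε (fH h)) ∧
    (∀ i, fH (C.Γ.leg i) = C'.Γ.leg i) ∧
    (∀ v, C'.w (fV v) = C.w v) ∧
    (∀ h, C'.len (fH h) = C.len h)

/-- Move (i): `C'` is obtained from `C` by removing a `1`-valent vertex `v₀` of weight
`0` together with its adjacent edge `{h₀, ι h₀}` (all other data being unchanged). -/
def Move1 (C C' : TropCurve g n) : Prop :=
  ∃ (v₀ : C.Γ.V) (h₀ : C.Γ.H),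
    C.Γ.valence v₀ = 1 ∧ C.w v₀ = 0 ∧ C.Γ.ε h₀ = v₀ ∧ C.Γ.ι h₀ ≠ h₀ ∧
    ∃ (fV : C'.Γ.V → C.Γ.V) (fH : C'.Γ.H → C.Γ.H),
      Function.Injective fV ∧ Set.range fV = {v | v ≠ v₀} ∧
      Function.Injective fH ∧ Set.range fH = {h | h ≠ h₀ ∧ h ≠ C.Γ.ι h₀} ∧
      (∀ x, fH (C'.Γ.ι x) = C.Γ.ι (fH x)) ∧
      (∀ x, fV (C'.Γ.ε x) = C.Γ.ε (fH x)) ∧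
      (∀ i, fH (C'.Γ.leg i) = C.Γ.leg i) ∧
      (∀ x, C'.w x = C.w (fV x)) ∧
      (∀ x, C'.len x = C.len (fH x))

/-- Move (ii), first case: `C'` is obtained from `C` by removing a `2`-valent vertex `v₀`
of weight `0` adjacent to two distinct edges (via the half-edges `h₁, h₂`), which are
merged into a single edge whose length is the sum of the two lengths. -/
def Move2a (C C' : TropCurve g n) : Prop :=
  ∃ (v₀ : C.Γ.V) (h₁ h₂ : C.Γ.H),
    C.Γ.valence v₀ = 2 ∧ C.w v₀ = 0 ∧
    h₁ ≠ h₂ ∧ C.Γ.ε h₁ = v₀ ∧ C.Γ.ε h₂ = v₀ ∧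
    C.Γ.ι h₁ ≠ h₁ ∧ C.Γ.ι h₂ ≠ h₂ ∧ C.Γ.ι h₁ ≠ h₂ ∧
    ∃ (fV : C'.Γ.V → C.Γ.V) (fH : C'.Γ.H → C.Γ.H),
      Function.Injective fV ∧ Set.range fV = {v | v ≠ v₀} ∧
      Function.Injective fH ∧ Set.range fH = {h | h ≠ h₁ ∧ h ≠ h₂} ∧
      (∀ x, fV (C'.Γ.ε x) = C.Γ.ε (fH x)) ∧
      (∀ i, fH (C'.Γ.leg i) = C.Γ.leg i) ∧
      (∀ x, C'.w x = C.w (fV x)) ∧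
      (∀ x, (fH x = C.Γ.ι h₁ → fH (C'.Γ.ι x) = C.Γ.ι h₂) ∧
            (fH x = C.Γ.ι h₂ → fH (C'.Γ.ι x) = C.Γ.ι h₁) ∧
            (fH x ≠ C.Γ.ι h₁ → fH x ≠ C.Γ.ι h₂ → fH (C'.Γ.ι x) = C.Γ.ι (fH x))) ∧
      (∀ x, ((fH x = C.Γ.ι h₁ ∨ fH x = C.Γ.ι h₂) → C'.len x = C.len h₁ + C.len h₂) ∧
            (fH x ≠ C.Γ.ι h₁ → fH x ≠ C.Γ.ι h₂ → C'.len x = C.len (fH x)))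

/-- Move (ii), second case: `C'` is obtained from `C` by removing a `2`-valent vertex
`v₀` of weight `0` adjacent to a leg `h₁` and an edge (via `h₂`); the edge and the leg
are merged into a single leg based at the other endpoint of the edge. -/
def Move2b (C C' : TropCurve g n) : Prop :=
  ∃ (v₀ : C.Γ.V) (h₁ h₂ : C.Γ.H),
    C.Γ.valence v₀ = 2 ∧ C.w v₀ = 0 ∧
    h₁ ≠ h₂ ∧ C.Γ.ε h₁ = v₀ ∧ C.Γ.ε h₂ = v₀ ∧
    C.Γ.ι h₁ = h₁ ∧ C.Γ.ι h₂ ≠ h₂ ∧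
    ∃ (fV : C'.Γ.V → C.Γ.V) (fH : C'.Γ.H → C.Γ.H),
      Function.Injective fV ∧ Set.range fV = {v | v ≠ v₀} ∧
      Function.Injective fH ∧ Set.range fH = {h | h ≠ h₂ ∧ h ≠ C.Γ.ι h₂} ∧
      (∀ i, fH (C'.Γ.leg i) = C.Γ.leg i) ∧
      (∀ x, C'.w x = C.w (fV x)) ∧
      (∀ x, (fH x = h₁ →
              fH (C'.Γ.ι x) = h₁ ∧ fV (C'.Γ.ε x) = C.Γ.ε (C.Γ.ι h₂) ∧ C'.len x = ⊤) ∧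
            (fH x ≠ h₁ →
              fH (C'.Γ.ι x) = C.Γ.ι (fH x) ∧ fV (C'.Γ.ε x) = C.Γ.ε (fH x) ∧
                C'.len x = C.len (fH x)))

/-- An elementary move between tropical curves. -/
def ElemMove (C C' : TropCurve g n) : Prop := Move1 C C' ∨ Move2a C C' ∨ Move2b C C'

/-- Tropical equivalence: the equivalence relation generated by the elementary moves
(i.e. finite sequences of elementary moves and their inverses). -/
def TropEquiv (C C' : TropCurve g n) : Prop := Relation.EqvGen ElemMove C C'

end TropCurve

namespace TropNet

/-! ### Elimination of a vertex -/

section Elim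

variable {V H : Type}

/-- Elimination of the vertex `v` from a metric matching `N` of half-edges, where `N a b l` says
that `a` and `b` form an edge of length `l`: half-edges at `v` are discarded, and an edge
ending at `v` is concatenated with an edge leaving `v` through a different half-edge. -/
def elim (ε : H → V) (v : V) (N : H → H → ℝ≥0∞ → Prop) (a b : H) (l : ℝ≥0∞) : Prop :=
  ε a ≠ v ∧ ε b ≠ v ∧ (N a b l ∨ ∃ h k l₁ l₂,
    ε h = v ∧ ε k = v ∧ h ≠ k ∧ N a h l₁ ∧ N k b l₂ ∧ l = l₁ + l₂)

/-- At most two half-edges are based at `v`. -/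
def Thin (ε : H → V) (v : V) : Prop :=
  ∀ h k j, ε h = v → ε k = v → ε j = v → h = k ∨ h = j ∨ k = j

/-- `N` is symmetric. -/
def Symm (N : H → H → ℝ≥0∞ → Prop) : Prop := ∀ a b l, N a b l → N b a l

/-- `N` is a partial function: a half-edge has at most one partner and one length. -/
def Func (N : H → H → ℝ≥0∞ → Prop) : Prop := ∀ a b c l m, N a b l → N a c m → b = c ∧ l = m

theorem elim_symm {ε : H → V} {v : V} {N : H → H → ℝ≥0∞ → Prop} (hs : Symm N) :
    Symm (elim ε v N) := by
  rintro a b l ⟨ha, hb, h | ⟨h, k, l₁, l₂, hh, hk, hne, h1, h2, rfl⟩⟩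
  · exact ⟨hb, ha, Or.inl (hs _ _ _ h)⟩
  · exact ⟨hb, ha, Or.inr ⟨k, h, l₂, l₁, hk, hh, hne.symm, hs _ _ _ h2, hs _ _ _ h1,
      add_comm _ _⟩⟩

/-- Through a vertex of valence at most two, a half-edge arriving there leaves in at most one way,
so elimination produces a matching again. -/
theorem elim_func {ε : H → V} {v : V} {N : H → H → ℝ≥0∞ → Prop} (hf : Func N)
    (ht : Thin ε v) : Func (elim ε v N) := by
  rintro a b c l m ⟨-, hb, h | ⟨h, k, l₁, l₂, hh, hk, hne, h1, h2, rfl⟩⟩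
    ⟨-, hc, h' | ⟨h', k', l₁', l₂', hh', hk', hne', h1', h2', rfl⟩⟩
  · exact hf _ _ _ _ _ h h'
  · exact absurd hh' ((hf _ _ _ _ _ h h1').1 ▸ hb)
  · exact absurd hh ((hf _ _ _ _ _ h' h1).1 ▸ hc)
  · obtain ⟨rfl, rfl⟩ := hf _ _ _ _ _ h1 h1'
    obtain rfl : k = k' := by
      rcases ht h k k' hh hk hk' with e | e | e
      · exact absurd e hne
      · exact absurd e hne'
      · exact e
    obtain ⟨rfl, rfl⟩ := hf _ _ _ _ _ h2 h2'
    exact ⟨rfl, rfl⟩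

theorem elim_alive {ε : H → V} {v : V} {N : H → H → ℝ≥0∞ → Prop} {a b : H} {l : ℝ≥0∞}
    (h : elim ε v N a b l) : ∃ c m, N a c m := by
  obtain ⟨-, -, h | ⟨h, k, l₁, l₂, -, -, -, h1, -⟩⟩ := h
  exacts [⟨_, _, h⟩, ⟨_, _, h1⟩]

/-- One inclusion of the commutation of eliminations: a path through `v` and `u` in the graph
can be cut first at `u` and then at `v`. -/
theorem elim_comm_le {ε : H → V} {u v : V} {N : H → H → ℝ≥0∞ → Prop} (huv : u ≠ v)
    (hs : Symm N) (hf : Func N) (hv : Thin ε v) {a b : H} {l : ℝ≥0∞}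
    (h : elim ε u (elim ε v N) a b l) : elim ε v (elim ε u N) a b l := by
  obtain ⟨hau, hbu, ⟨hav, hbv, h | ⟨h, k, l₁, l₂, hh, hk, hne, h1, h2, rfl⟩⟩ |
    ⟨h, k, l₁, l₂, hh, hk, hne, ⟨hav, hhv, h1⟩, ⟨hkv, hbv, h2⟩, rfl⟩⟩ := h
  · exact ⟨hav, hbv, Or.inl ⟨hau, hbu, Or.inl h⟩⟩
  · exact ⟨hav, hbv, Or.inr ⟨h, k, l₁, l₂, hh, hk, hne,
      ⟨hau, hh ▸ huv.symm, Or.inl h1⟩, ⟨hk ▸ huv.symm, hbu, Or.inl h2⟩, rfl⟩⟩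
  · rcases h1 with h1 | ⟨x, y, m₁, m₂, hx, hy, hxy, h11, h12, rfl⟩ <;>
    rcases h2 with h2 | ⟨x', y', m₁', m₂', hx', hy', hxy', h21, h22, rfl⟩
    · exact ⟨hav, hbv, Or.inl ⟨hau, hbu, Or.inr ⟨h, k, l₁, l₂, hh, hk, hne, h1, h2, rfl⟩⟩⟩
    · exact ⟨hav, hbv, Or.inr ⟨x', y', l₁ + m₁', m₂', hx', hy', hxy',
        ⟨hau, hx' ▸ huv.symm, Or.inr ⟨h, k, _, _, hh, hk, hne, h1, h21, rfl⟩⟩,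
        ⟨hy' ▸ huv.symm, hbu, Or.inl h22⟩, (add_assoc _ _ _).symm⟩⟩
    · exact ⟨hav, hbv, Or.inr ⟨x, y, m₁, m₂ + l₂, hx, hy, hxy,
        ⟨hau, hx ▸ huv.symm, Or.inl h11⟩,
        ⟨hy ▸ huv.symm, hbu, Or.inr ⟨h, k, _, _, hh, hk, hne, h12, h2, rfl⟩⟩, add_assoc _ _ _⟩⟩
    · -- A path visiting `v`, `u`, `v` would need three different half-edges at `v`.
      exfalso
      rcases hv x y x' hx hy hx' with e | e | e
      · exact hxy e
      · subst e
        have := (hf _ _ _ _ _ (hs _ _ _ h11) (hs _ _ _ h21)).1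
        exact hau (this ▸ hk)
      · subst e
        exact hne (hf _ _ _ _ _ h12 (hs _ _ _ h21)).1

/-- Eliminations of two different vertices of valence at most two commute. -/
theorem elim_comm {ε : H → V} {u v : V} {N : H → H → ℝ≥0∞ → Prop} (huv : u ≠ v)
    (hs : Symm N) (hf : Func N) (hu : Thin ε u) (hv : Thin ε v) :
    elim ε u (elim ε v N) = elim ε v (elim ε u N) := by
  funext a b l
  exact propext ⟨elim_comm_le huv hs hf hv, elim_comm_le huv.symm hs hf hu⟩

end Elim

/-! ### Nets and their reductions -/

/-- A metric graph without legs and with tagged vertices; the matching `M` of half-edges into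
edges is recorded as a relation together with the lengths. A tag `inl k` is an ordinary vertex of
weight `k`, and a tag `inr i` is the end at infinity of the leg `i`. -/
structure Net (n : ℕ) where
  V : Type
  H : Type
  ε : H → V
  tag : V → ℕ ⊕ Fin n
  M : H → H → ℝ≥0∞ → Prop
  symm : Symm M
  func : Func M
  alive : ∀ a, ∃ b l, M a b l

variable {n : ℕ}

/-- An identification of `Y` with the net carried by the vertices of `X` satisfying `P`, with the
half-edges of `X` matched by `N` as half-edges and `N` as matching. -/
structure Emb (X : Net n) (P : X.V → Prop) (N : X.H → X.H → ℝ≥0∞ → Prop) (Y : Net n) where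
  fV : Y.V → X.V
  fH : Y.H → X.H
  injV : Function.Injective fV
  injH : Function.Injective fH
  rangeV : ∀ x, (∃ y, fV y = x) ↔ P x
  surjH : ∀ a b l, N a b l → ∃ y, fH y = a
  hε : ∀ y, fV (Y.ε y) = X.ε (fH y)
  htag : ∀ y, Y.tag y = X.tag (fV y)
  hM : ∀ a b l, Y.M a b l ↔ N (fH a) (fH b) l

/-- Isomorphism of nets. -/
def NIso (X Y : Net n) : Prop := Nonempty (Emb X (fun _ => True) X.M Y)

/-- `Y` is obtained from `X` by eliminating an ordinary vertex of weight zero and valence at most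
two, up to isomorphism. -/
def Step (X Y : Net n) : Prop :=
  ∃ v, X.tag v = Sum.inl 0 ∧ Thin X.ε v ∧ Nonempty (Emb X (fun x => x ≠ v) (elim X.ε v X.M) Y)

/-- The concrete net identified by `Emb`. -/
def sub (X : Net n) (P : X.V → Prop) (N : X.H → X.H → ℝ≥0∞ → Prop) (hs : Symm N) (hf : Func N)
    (hP : ∀ a b l, N a b l → P (X.ε a)) : Net n where
  V := {x // P x}
  H := {a // ∃ b l, N a b l}
  ε a := ⟨X.ε a.1, by obtain ⟨b, l, h⟩ := a.2; exact hP _ _ _ h⟩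
  tag x := X.tag x.1
  M a b l := N a.1 b.1 l
  symm _ _ _ h := hs _ _ _ h
  func _ _ _ _ _ h h' := ⟨Subtype.ext (hf _ _ _ _ _ h h').1, (hf _ _ _ _ _ h h').2⟩
  alive a := by
    obtain ⟨a, b, l, h⟩ := a
    exact ⟨⟨b, a, l, hs _ _ _ h⟩, l, h⟩

/-- The tautological identification for `sub`. -/
def subEmb (X : Net n) (P : X.V → Prop) (N : X.H → X.H → ℝ≥0∞ → Prop) (hs : Symm N)
    (hf : Func N) (hP : ∀ a b l, N a b l → P (X.ε a)) : Emb X P N (sub X P N hs hf hP) where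
  fV := Subtype.val
  fH := Subtype.val
  injV := Subtype.val_injective
  injH := Subtype.val_injective
  rangeV x := ⟨fun ⟨y, hy⟩ => hy ▸ y.2, fun h => ⟨⟨x, h⟩, rfl⟩⟩
  surjH a b l h := ⟨⟨a, b, l, h⟩, rfl⟩
  hε _ := rfl
  htag _ := rfl
  hM _ _ _ := Iff.rfl

/-- If `N'` and `P'` are smaller than `N` and `P`, an identification for `(P', N')` factors
through one for `(P, N)`. -/
theorem Emb.factor {X Y W : Net n} {P P' : X.V → Prop} {N N' : X.H → X.H → ℝ≥0∞ → Prop}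
    (f : Emb X P N Y) (g : Emb X P' N' W) (hP : ∀ x, P' x → P x)
    (hN : ∀ a b l, N' a b l → ∃ c m, N a c m) (Q : Y.V → Prop) (K : Y.H → Y.H → ℝ≥0∞ → Prop)
    (hQ : ∀ y, Q y ↔ P' (f.fV y)) (hK : ∀ a b l, K a b l ↔ N' (f.fH a) (f.fH b) l) :
    Nonempty (Emb Y Q K W) := by
  have h1 : ∀ w, ∃ y, f.fV y = g.fV w := fun w =>
    (f.rangeV _).2 (hP _ ((g.rangeV _).1 ⟨w, rfl⟩))
  have h2 : ∀ w, ∃ y, f.fH y = g.fH w := fun w => by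
    obtain ⟨b, l, h⟩ := W.alive w
    obtain ⟨c, m, h⟩ := hN _ _ _ ((g.hM _ _ _).1 h)
    exact f.surjH _ _ _ h
  choose φ hφ using h1
  choose ψ hψ using h2
  refine ⟨⟨φ, ψ, ?_, ?_, ?_, ?_, ?_, ?_, ?_⟩⟩
  · intro a b e
    exact g.injV (by rw [← hφ, ← hφ, e])
  · intro a b e
    exact g.injH (by rw [← hψ, ← hψ, e])
  · intro y
    rw [hQ, ← g.rangeV]
    exact exists_congr fun w => by rw [← hφ]; exact f.injV.eq_iff.symm
  · intro a b l h
    obtain ⟨w, hw⟩ := g.surjH _ _ _ ((hK _ _ _).1 h)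
    exact ⟨w, f.injH (by rw [hψ, hw])⟩
  · intro y
    apply f.injV
    rw [hφ, g.hε, f.hε, hψ]
  · intro y
    rw [g.htag, f.htag, hφ]
  · intro a b l
    rw [hK, g.hM, hψ, hψ]

theorem Emb.iso {X Y W : Net n} {P : X.V → Prop} {N : X.H → X.H → ℝ≥0∞ → Prop}
    (f : Emb X P N Y) (g : Emb X P N W) : NIso Y W :=
  f.factor g (fun _ h => h) (fun _ _ _ h => ⟨_, _, h⟩) _ _
    (fun y => by simpa using (f.rangeV _).1 ⟨y, rfl⟩) f.hM

/-- Elimination is compatible with identifications. -/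
theorem Emb.elim_iff {X Y : Net n} {P : X.V → Prop} {N : X.H → X.H → ℝ≥0∞ → Prop}
    (f : Emb X P N Y) (hs : Symm N) (u : Y.V) (a b : Y.H) (l : ℝ≥0∞) :
    elim Y.ε u Y.M a b l ↔ elim X.ε (f.fV u) N (f.fH a) (f.fH b) l := by
  have he : ∀ y, X.ε (f.fH y) = f.fV u ↔ Y.ε y = u := fun y => by
    rw [← f.hε, f.injV.eq_iff]
  unfold elim
  rw [Ne, Ne, Ne, Ne, he, he, f.hM]
  refine and_congr_right fun _ => and_congr_right fun _ => or_congr_right ⟨?_, ?_⟩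
  · rintro ⟨h, k, l₁, l₂, hh, hk, hne, h1, h2, rfl⟩
    exact ⟨f.fH h, f.fH k, l₁, l₂, (he _).2 hh, (he _).2 hk, f.injH.ne hne,
      (f.hM _ _ _).1 h1, (f.hM _ _ _).1 h2, rfl⟩
  · rintro ⟨h, k, l₁, l₂, hh, hk, hne, h1, h2, rfl⟩
    obtain ⟨h, rfl⟩ := f.surjH _ _ _ (hs _ _ _ h1)
    obtain ⟨k, rfl⟩ := f.surjH _ _ _ h2
    exact ⟨h, k, l₁, l₂, (he _).1 hh, (he _).1 hk, fun e => hne (e ▸ rfl),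
      (f.hM _ _ _).2 h1, (f.hM _ _ _).2 h2, rfl⟩

/-- A further elimination, described inside `X`, is a step out of `Y`. -/
theorem Emb.step {X Y W : Net n} {P : X.V → Prop} {N : X.H → X.H → ℝ≥0∞ → Prop}
    (f : Emb X P N Y) (hs : Symm N) {u : X.V} (hu : P u) (ht : X.tag u = Sum.inl 0)
    (hthin : Thin X.ε u) (g : Emb X (fun x => P x ∧ x ≠ u) (elim X.ε u N) W) : Step Y W := by
  obtain ⟨u, rfl⟩ := (f.rangeV _).2 hu
  refine ⟨u, by rw [f.htag, ht], ?_, ?_⟩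
  · intro h k j hh hk hj
    simpa only [f.injH.eq_iff] using hthin (f.fH h) (f.fH k) (f.fH j) (by rw [← f.hε, hh])
      (by rw [← f.hε, hk]) (by rw [← f.hε, hj])
  · refine f.factor g (fun _ h => h.1) (fun _ _ _ h => elim_alive h) _ _ (fun y => ?_)
      (f.elim_iff hs u)
    rw [Ne, Ne, f.injV.eq_iff]
    exact ⟨fun h => ⟨(f.rangeV _).1 ⟨y, rfl⟩, h⟩, fun h => h.2⟩

theorem NIso.refl (X : Net n) : NIso X X :=
  ⟨⟨id, id, fun _ _ h => h, fun _ _ h => h, fun x => by simp, fun a _ _ _ => ⟨a, rfl⟩,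
    fun _ => rfl, fun _ => rfl, fun _ _ _ => Iff.rfl⟩⟩

theorem NIso.left {X Y Z : Net n} (h : NIso X Y) (h' : NIso X Z) : NIso Y Z :=
  h.some.iso h'.some

theorem NIso.symm {X Y : Net n} (h : NIso X Y) : NIso Y X := h.left (NIso.refl X)

/-- Steps are invariant under isomorphism of the source. -/
theorem NIso.step {X Y Z : Net n} (h : NIso X Y) (h' : Step X Z) : Step Y Z := by
  obtain ⟨f⟩ := h
  obtain ⟨v, ht, hv, ⟨g⟩⟩ := h'
  refine f.step X.symm trivial ht hv ?_
  simpa using g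

/-- A step or an isomorphism. -/
def Red (X Y : Net n) : Prop := NIso X Y ∨ Step X Y

/-- The diamond property of steps and isomorphisms. -/
theorem Red.diamond (X Y Z : Net n) (h : Red X Y) (h' : Red X Z) :
    ∃ W, Relation.ReflGen Red Y W ∧ Relation.ReflTransGen Red Z W := by
  rcases h with h | h <;> rcases h' with h' | h'
  · exact ⟨Z, .single (Or.inl (h.left h')), .refl⟩
  · exact ⟨Z, .single (Or.inr (h.step h')), .refl⟩
  · exact ⟨Y, .refl, .single (Or.inr (h'.step h))⟩
  obtain ⟨v, hv0, hv, ⟨f⟩⟩ := h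
  obtain ⟨u, hu0, hu, ⟨g⟩⟩ := h'
  by_cases huv : u = v
  · subst huv
    exact ⟨Z, .single (Or.inl (f.iso g)), .refl⟩
  have hsv := elim_symm (ε := X.ε) (v := v) X.symm
  have hsu := elim_symm (ε := X.ε) (v := u) X.symm
  let e := subEmb X (fun x => x ≠ v ∧ x ≠ u) (elim X.ε u (elim X.ε v X.M))
    (elim_symm hsv) (elim_func (elim_func X.func hv) hu)
    (fun a b l h => by
      refine ⟨?_, h.1⟩
      obtain ⟨c, m, h⟩ := elim_alive h
      exact h.1)
  refine ⟨_, .single (Or.inr (f.step hsv huv hu0 hu e)), .single (Or.inr ?_)⟩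
  refine g.step hsu (Ne.symm huv) hv0 hv ?_
  rw [← elim_comm huv X.symm X.func hu hv]
  simpa only [and_comm] using e

/-- A net without vertices to eliminate only reduces to isomorphic nets. -/
theorem iso_of_reduces {X Y : Net n} (hX : ∀ Z, ¬ Step X Z) (h : Relation.ReflTransGen Red X Y) :
    NIso X Y := by
  induction h with
  | refl => exact NIso.refl X
  | tail _ h ih =>
    rcases h with h | h
    · exact ih.symm.left h
    · exact absurd (ih.symm.step h) (hX _)

/-- By the Church–Rosser property, equivalent irreducible nets are isomorphic. -/
theorem iso_of_eqvGen {X Y : Net n} (hX : ∀ Z, ¬ Step X Z) (hY : ∀ Z, ¬ Step Y Z)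
    (h : Relation.EqvGen Step X Y) : NIso X Y := by
  have he := Relation.equivalence_join_reflTransGen (r := Red (n := n)) Red.diamond
  have h' : Relation.Join (Relation.ReflTransGen Red) X Y :=
    he.eqvGen_iff.1 (h.mono fun X Y h => ⟨Y, .single (Or.inr h), .refl⟩)
  obtain ⟨W, h1, h2⟩ := h'
  exact (iso_of_reduces hX h1).symm.left (iso_of_reduces hY h2).symm


/-! ### The net of a tropical curve -/

open TropCurve

variable {g : ℕ}

/-- The edges of the net of a tropical curve: those of the curve, and one edge of infinite length
for each leg, joining the leg to its end at infinity. -/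
def curveM (C : TropCurve g n) : C.Γ.H ⊕ Fin n → C.Γ.H ⊕ Fin n → ℝ≥0∞ → Prop
  | .inl a, .inl b, l => C.Γ.ι a = b ∧ a ≠ b ∧ l = C.len a
  | .inl a, .inr i, l => C.Γ.leg i = a ∧ l = ⊤
  | .inr i, .inl a, l => C.Γ.leg i = a ∧ l = ⊤
  | .inr _, .inr _, _ => False

theorem curveM_symm (C : TropCurve g n) : Symm (curveM C) := by
  rintro (a | i) (b | j) l h
  · obtain ⟨rfl, h2, rfl⟩ := h
    exact ⟨C.Γ.ι_invol a, h2.symm, (C.len_symm a).symm⟩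
  · exact h
  · exact h
  · exact h

theorem curveM_func (C : TropCurve g n) : Func (curveM C) := by
  rintro (a | i) (b | j) (c | k) l m h h'
  · obtain ⟨rfl, h2, rfl⟩ := h
    obtain ⟨rfl, h2', rfl⟩ := h'
    exact ⟨rfl, rfl⟩
  · obtain ⟨rfl, h2, rfl⟩ := h
    obtain ⟨rfl, rfl⟩ := h'
    exact absurd (C.Γ.leg_fix k).symm h2
  · obtain ⟨rfl, h2, rfl⟩ := h'
    obtain ⟨rfl, rfl⟩ := h
    exact absurd (C.Γ.leg_fix j).symm h2
  · obtain ⟨rfl, rfl⟩ := h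
    obtain ⟨e, rfl⟩ := h'
    exact ⟨congrArg _ (C.Γ.leg_inj e).symm, rfl⟩
  · obtain ⟨rfl, rfl⟩ := h
    obtain ⟨rfl, rfl⟩ := h'
    exact ⟨rfl, rfl⟩
  all_goals first | exact h.elim | exact h'.elim

/-- The endpoint map of the net of a tropical curve. -/
def curveε (C : TropCurve g n) : C.Γ.H ⊕ Fin n → C.Γ.V ⊕ Fin n := Sum.map C.Γ.ε id

/-- The net of a tropical curve: each leg is closed up by a tagged vertex at infinity, so that
merging an edge into a leg becomes an instance of merging two edges. -/
def curveNet (C : TropCurve g n) : Net n where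
  V := C.Γ.V ⊕ Fin n
  H := C.Γ.H ⊕ Fin n
  ε := curveε C
  tag := Sum.map C.w id
  M := curveM C
  symm := curveM_symm C
  func := curveM_func C
  alive := by
    rintro (a | i)
    · by_cases h : C.Γ.ι a = a
      · obtain ⟨i, hi⟩ := C.Γ.fix_leg a h
        exact ⟨.inr i, ⊤, hi, rfl⟩
      · exact ⟨.inl (C.Γ.ι a), C.len a, rfl, Ne.symm h, rfl⟩
    · exact ⟨.inl (C.Γ.leg i), ⊤, rfl, rfl⟩

theorem len_leg (C : TropCurve g n) (i : Fin n) : C.len (C.Γ.leg i) = ⊤ :=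
  (C.len_top_iff _).2 (Or.inl (C.Γ.leg_fix i))

/-- Stability ensures that no ordinary vertex of weight zero has valence at most two. -/
theorem not_step_of_stable {C : TropCurve g n} (hC : C.Γ.Stable C.w) (Z : Net n) :
    ¬ Step (curveNet C) Z := by
  rintro ⟨v | i, ht, hv, -⟩
  · have h3 := (hC v).1 (Sum.inl_injective ht)
    let _ := Fintype.ofFinite {h : C.Γ.H // C.Γ.ε h = v}
    rw [LeggedGraph.valence, Nat.card_eq_fintype_card] at h3
    obtain ⟨a, b, c, hab, hac, hbc⟩ := Fintype.two_lt_card_iff.1 h3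
    rcases hv (.inl a.1) (.inl b.1) (.inl c.1) (congrArg Sum.inl a.2) (congrArg Sum.inl b.2)
      (congrArg Sum.inl c.2) with e | e | e
    · exact hab (Subtype.ext (Sum.inl_injective e))
    · exact hac (Subtype.ext (Sum.inl_injective e))
    · exact hbc (Subtype.ext (Sum.inl_injective e))
  · exact absurd ht (by simp [curveNet])

/-! ### Elementary moves are elimination steps -/

/-- The half-edges at a vertex of valence one. -/
theorem eq_of_valence_one {G : LeggedGraph n} {v : G.V} (h : G.valence v = 1) {a b : G.H}
    (ha : G.ε a = v) (hb : G.ε b = v) : a = b := by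
  obtain ⟨_, _⟩ := Nat.card_eq_one_iff_unique.1 h
  exact congrArg Subtype.val
    (Subsingleton.elim (⟨a, ha⟩ : {h : G.H // G.ε h = v}) ⟨b, hb⟩)

/-- The half-edges at a vertex of valence two. -/
theorem eq_or_eq_of_valence_two {G : LeggedGraph n} {v : G.V} (h : G.valence v = 2) {a b c : G.H}
    (ha : G.ε a = v) (hb : G.ε b = v) (hab : a ≠ b) (hc : G.ε c = v) : c = a ∨ c = b := by
  let _ := Fintype.ofFinite {h : G.H // G.ε h = v}
  rw [LeggedGraph.valence, Nat.card_eq_fintype_card] at h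
  by_contra! hne
  have : 2 < Fintype.card {h : G.H // G.ε h = v} := Fintype.two_lt_card_iff.2
    ⟨⟨a, ha⟩, ⟨b, hb⟩, ⟨c, hc⟩, fun e => hab (congrArg Subtype.val e),
      fun e => hne.1 (congrArg Subtype.val e).symm, fun e => hne.2 (congrArg Subtype.val e).symm⟩
  omega

/-- Only half-edges of the curve itself are based at an ordinary vertex. -/
theorem inl_ε_eq {C : TropCurve g n} {v : C.Γ.V} {P : C.Γ.H ⊕ Fin n → Prop}
    (h : ∀ a, C.Γ.ε a = v → P (.inl a)) (x : C.Γ.H ⊕ Fin n)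
    (hx : curveε C x = Sum.inl v) : P x := by
  rcases x with a | i
  · exact h a (Sum.inl_injective hx)
  · exact absurd hx (by simp [curveε])

theorem ε_ne_iff (C : TropCurve g n) {v : C.Γ.V} {a : C.Γ.H} :
    curveε C (.inl a) ≠ Sum.inl v ↔ C.Γ.ε a ≠ v :=
  Sum.inl_injective.ne_iff

theorem ε_inr_ne (C : TropCurve g n) {v : C.Γ.V} {i : Fin n} :
    curveε C (.inr i) ≠ Sum.inl v := Sum.inr_ne_inl

theorem rangeV_map {A B : Type} {f : A → B} {v : B} (h : Set.range f = {x | x ≠ v})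
    (x : B ⊕ Fin n) : (∃ y, Sum.map f id y = x) ↔ x ≠ Sum.inl v := by
  rcases x with x | i
  · rw [Sum.inl_injective.ne_iff]
    have : x ∈ Set.range f ↔ x ≠ v := by rw [h]; rfl
    rw [← this]
    simp
  · simp

/-- At a vertex of valence two, elimination leaves the edges away from the vertex and the
concatenation of the two edges at the vertex. -/
theorem elim_two {C : TropCurve g n} {v : C.Γ.V} {h₁ h₂ : C.Γ.H} (hv : C.Γ.valence v = 2)
    (hne : h₁ ≠ h₂) (e₁ : C.Γ.ε h₁ = v) (e₂ : C.Γ.ε h₂ = v) (a b : C.Γ.H ⊕ Fin n) (l : ℝ≥0∞) :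
    elim (curveε C) (Sum.inl v) (curveM C) a b l ↔
      curveε C a ≠ Sum.inl v ∧
      curveε C b ≠ Sum.inl v ∧
      (curveM C a b l ∨
        (∃ l₁ l₂, curveM C a (.inl h₁) l₁ ∧ curveM C (.inl h₂) b l₂ ∧ l = l₁ + l₂) ∨
        (∃ l₁ l₂, curveM C a (.inl h₂) l₁ ∧ curveM C (.inl h₁) b l₂ ∧ l = l₁ + l₂)) := by
  refine and_congr_right fun _ => and_congr_right fun _ => or_congr_right ⟨?_, ?_⟩
  · rintro ⟨h, k, l₁, l₂, hh, hk, hhk, h1, h2, rfl⟩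
    revert hhk h1 h2
    refine inl_ε_eq (P := fun h => h ≠ k → curveM C a h l₁ → curveM C k b l₂ → _) ?_ h hh
    intro h hh
    refine inl_ε_eq (P := fun k => Sum.inl h ≠ k → curveM C a (.inl h) l₁ → curveM C k b l₂ → _)
      ?_ k hk
    intro k hk hhk h1 h2
    rcases eq_or_eq_of_valence_two hv e₁ e₂ hne hh with rfl | rfl <;>
    rcases eq_or_eq_of_valence_two hv e₁ e₂ hne hk with rfl | rfl
    · exact absurd rfl hhk
    · exact Or.inl ⟨_, _, h1, h2, rfl⟩
    · exact Or.inr ⟨_, _, h1, h2, rfl⟩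
    · exact absurd rfl hhk
  · have f₁ : curveε C (.inl h₁) = Sum.inl v := congrArg Sum.inl e₁
    have f₂ : curveε C (.inl h₂) = Sum.inl v := congrArg Sum.inl e₂
    rintro (⟨l₁, l₂, h⟩ | ⟨l₁, l₂, h⟩)
    · exact ⟨_, _, l₁, l₂, f₁, f₂, Sum.inl_injective.ne hne, h⟩
    · exact ⟨_, _, l₁, l₂, f₂, f₁, Sum.inl_injective.ne hne.symm, h⟩

theorem thin_two {C : TropCurve g n} {v : C.Γ.V} {h₁ h₂ : C.Γ.H} (hv : C.Γ.valence v = 2)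
    (hne : h₁ ≠ h₂) (e₁ : C.Γ.ε h₁ = v) (e₂ : C.Γ.ε h₂ = v) :
    Thin (curveε C) (Sum.inl v) := by
  have key := inl_ε_eq (P := fun x => x = Sum.inl h₁ ∨ x = Sum.inl h₂) (fun a ha =>
    (eq_or_eq_of_valence_two hv e₁ e₂ hne ha).imp (congrArg _) (congrArg _))
  intro h k j hh hk hj
  rcases key h hh with rfl | rfl <;> rcases key k hk with rfl | rfl <;>
    rcases key j hj with rfl | rfl <;> simp

/-- A step between the nets of two curves, from an injection of vertices of the curves and an
injection `F` of half-edges of the nets. The map `F` need not preserve the two kinds of half-edges a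
priori, which leaves room for the representative of a lengthened leg in the third move. -/
theorem curve_step {C C' : TropCurve g n} {v : C.Γ.V} (hw : C.w v = 0)
    (ht : Thin (curveε C) (Sum.inl v)) {fV : C'.Γ.V → C.Γ.V} (iV : Function.Injective fV)
    (rV : Set.range fV = {x | x ≠ v}) (Hw : ∀ x, C'.w x = C.w (fV x))
    {F : C'.Γ.H ⊕ Fin n → C.Γ.H ⊕ Fin n} (iF : Function.Injective F)
    (hF : ∀ a b l, elim (curveε C) (Sum.inl v) (curveM C) a b l → ∃ x, F x = a)
    (Hε : ∀ x, Sum.map fV id (curveε C' x) = curveε C (F x))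
    (HM : ∀ a b l, curveM C' a b l ↔ elim (curveε C) (Sum.inl v) (curveM C) (F a) (F b) l) :
    Step (curveNet C) (curveNet C') := by
  refine ⟨Sum.inl v, congrArg Sum.inl hw, ht, ⟨⟨Sum.map fV id, F,
      Sum.map_injective.2 ⟨iV, fun _ _ h => h⟩, iF, rangeV_map rV, hF, Hε, ?_, HM⟩⟩⟩
  rintro (x | i)
  · exact congrArg Sum.inl (Hw x)
  · rfl

/-- Removing a vertex of valence one: elimination discards its half-edge, and the opposite
half-edge loses its partner. -/
theorem step_of_move1 {C C' : TropCurve g n} (h : Move1 C C') : Step (curveNet C) (curveNet C') := by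
  obtain ⟨v, h₀, hv, hw, he, hι, fV, fH, iV, rV, iH, rH, Hι, Hε, Hleg, Hw, Hl⟩ := h
  have thin1 := inl_ε_eq (P := fun x => x = Sum.inl h₀)
    (fun a ha => congrArg Sum.inl (eq_of_valence_one hv ha he))
  have helim : ∀ a b l, elim (curveε C) (Sum.inl v) (curveM C) a b l ↔
      curveε C a ≠ Sum.inl v ∧
      curveε C b ≠ Sum.inl v ∧ curveM C a b l := by
    intro a b l
    refine and_congr_right fun _ => and_congr_right fun _ => or_iff_left ?_
    rintro ⟨h, k, _, _, hh, hk, hne, -⟩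
    exact hne ((thin1 h hh).trans (thin1 k hk).symm)
  have hr : ∀ a, (∃ x, fH x = a) ↔ a ≠ h₀ ∧ a ≠ C.Γ.ι h₀ := fun a => by
    change a ∈ Set.range fH ↔ _
    rw [rH]; rfl
  have hεv : ∀ x, C.Γ.ε (fH x) ≠ v := fun x e =>
    ((hr _).1 ⟨x, rfl⟩).1 (eq_of_valence_one hv e he)
  refine curve_step hw (fun h k j hh hk _ => Or.inl ((thin1 h hh).trans (thin1 k hk).symm))
    iV rV Hw (Sum.map_injective.2 ⟨iH, fun _ _ h => h⟩ : Function.Injective (Sum.map fH id))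
    ?_ ?_ ?_
  · intro a b l h
    obtain ⟨ha, hb, h⟩ := (helim a b l).1 h
    rcases a with a | i
    · have : ∃ x, fH x = a := by
        rw [hr]
        constructor
        · rintro rfl
          exact (ε_ne_iff C).1 ha he
        · rintro rfl
          have := (curveM_func C _ _ (.inl h₀) _ (C.len (C.Γ.ι h₀)) h
            ⟨C.Γ.ι_invol _, hι, rfl⟩).1
          subst this
          exact (ε_ne_iff C).1 hb he
      obtain ⟨x, rfl⟩ := this
      exact ⟨.inl x, rfl⟩
    · exact ⟨.inr i, rfl⟩
  · rintro (x | i)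
    · exact congrArg Sum.inl (Hε x)
    · rfl
  · intro a b l
    rw [helim]
    have hn : ∀ x : C'.Γ.H ⊕ Fin n,
        curveε C (Sum.map fH id x) ≠ Sum.inl v := by
      rintro (x | i)
      · exact (ε_ne_iff C).2 (hεv x)
      · exact ε_inr_ne C
    simp only [hn, ne_eq, not_false_eq_true, true_and]
    rcases a with a | i <;> rcases b with b | j
    · simp only [curveM, Sum.map_inl, ← Hι, iH.eq_iff, iH.ne_iff, Hl]
    · simp only [curveM, Sum.map_inl, Sum.map_inr, ← Hleg, iH.eq_iff, id]
    · simp only [curveM, Sum.map_inl, Sum.map_inr, ← Hleg, iH.eq_iff, id]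
    · rfl

/-- Merging two edges is elimination of their common vertex. -/
theorem step_of_move2a {C C' : TropCurve g n} (h : Move2a C C') :
    Step (curveNet C) (curveNet C') := by
  obtain ⟨v, h₁, h₂, hv, hw, hne, e₁, e₂, n₁, n₂, n₁₂, fV, fH, iV, rV, iH, rH, Hε, Hleg, Hw, Hι,
    Hl⟩ := h
  have hr : ∀ a, (∃ x, fH x = a) ↔ a ≠ h₁ ∧ a ≠ h₂ := fun a => by
    change a ∈ Set.range fH ↔ _
    rw [rH]; rfl
  have hεv : ∀ x, C.Γ.ε (fH x) ≠ v := fun x e => by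
    have := (hr _).1 ⟨x, rfl⟩
    rcases eq_or_eq_of_valence_two hv e₁ e₂ hne e with h | h
    exacts [this.1 h, this.2 h]
  refine curve_step hw (thin_two hv hne e₁ e₂) iV rV Hw
    (Sum.map_injective.2 ⟨iH, fun _ _ h => h⟩ : Function.Injective (Sum.map fH id)) ?_ ?_ ?_
  · intro a b l h
    rcases a with a | i
    · have : ∃ x, fH x = a := by
        rw [hr]
        have := (ε_ne_iff C).1 h.1
        exact ⟨fun e => this (e ▸ e₁), fun e => this (e ▸ e₂)⟩
      obtain ⟨x, rfl⟩ := this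
      exact ⟨.inl x, rfl⟩
    · exact ⟨.inr i, rfl⟩
  · rintro (x | i)
    · exact congrArg Sum.inl (Hε x)
    · rfl
  · intro a b l
    rw [elim_two hv hne e₁ e₂]
    have hn : ∀ x : C'.Γ.H ⊕ Fin n,
        curveε C (Sum.map fH id x) ≠ Sum.inl v := by
      rintro (x | i)
      · exact (ε_ne_iff C).2 (hεv x)
      · exact ε_inr_ne C
    simp only [hn, ne_eq, not_false_eq_true, true_and]
    have hl₁ : ∀ i, C.Γ.leg i ≠ h₁ := fun i e => n₁ (e ▸ C.Γ.leg_fix i)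
    have hl₂ : ∀ i, C.Γ.leg i ≠ h₂ := fun i e => n₂ (e ▸ C.Γ.leg_fix i)
    rcases a with a | i <;> rcases b with b | j
    · have hy := (hr _).1 ⟨b, rfl⟩
      have hι' : ∀ x y, C.Γ.ι x = y ↔ x = C.Γ.ι y := fun x y =>
        ⟨fun e => by rw [← e, C.Γ.ι_invol], fun e => by rw [e, C.Γ.ι_invol]⟩
      have hιne : C.Γ.ι h₁ ≠ C.Γ.ι h₂ := fun e => hne (by rw [← C.Γ.ι_invol h₁, e, C.Γ.ι_invol])
      obtain ⟨p₁, p₂, p₃⟩ := Hι a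
      obtain ⟨q₁, q₂⟩ := Hl a
      simp only [curveM, Sum.map_inl, ← iH.eq_iff (a := C'.Γ.ι a), ← iH.ne_iff (x := a)]
      by_cases c₁ : fH a = C.Γ.ι h₁
      · rw [p₁ c₁, q₁ (Or.inl c₁), c₁]
        have := C.len_symm h₁
        simp only [C.Γ.ι_invol]
        grind
      · by_cases c₂ : fH a = C.Γ.ι h₂
        · rw [p₂ c₂, q₁ (Or.inr c₂), c₂]
          have := C.len_symm h₂
          have := add_comm (C.len h₁) (C.len h₂)
          simp only [C.Γ.ι_invol]
          grind
        · rw [p₃ c₁ c₂, q₂ c₁ c₂]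
          have c₁' : C.Γ.ι (fH a) ≠ h₁ := fun e => c₁ ((hι' _ _).1 e)
          have c₂' : C.Γ.ι (fH a) ≠ h₂ := fun e => c₂ ((hι' _ _).1 e)
          simp only [c₁', c₂', ne_eq, false_and, exists_false, or_false]
    · simp [curveM, ← iH.eq_iff (b := a), Hleg, hl₁, hl₂]
    · simp [curveM, ← iH.eq_iff (b := b), Hleg, hl₁, hl₂]
    · simp [curveM, hl₁, hl₂]

/-- Merging an edge into a leg is merging two edges of the net, the second one leading to the end
of the leg at infinity; the merged edge has infinite length. -/
theorem step_of_move2b {C C' : TropCurve g n} (h : Move2b C C') :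
    Step (curveNet C) (curveNet C') := by
  obtain ⟨v, h₁, h₂, hv, hw, hne, e₁, e₂, n₁, n₂, fV, fH, iV, rV, iH, rH, Hleg, Hw, Hx⟩ := h
  have hr : ∀ a, (∃ x, fH x = a) ↔ a ≠ h₂ ∧ a ≠ C.Γ.ι h₂ := fun a => by
    change a ∈ Set.range fH ↔ _
    rw [rH]; rfl
  have m₁ : ∀ x, fH x ≠ h₂ := fun x => ((hr _).1 ⟨x, rfl⟩).1
  have m₂ : ∀ x, fH x ≠ C.Γ.ι h₂ := fun x => ((hr _).1 ⟨x, rfl⟩).2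
  have hι' : ∀ x y, C.Γ.ι x = y ↔ x = C.Γ.ι y := fun x y =>
    ⟨fun e => by rw [← e, C.Γ.ι_invol], fun e => by rw [e, C.Γ.ι_invol]⟩
  have h12 : C.Γ.ι h₂ ≠ h₁ := fun e => by
    rw [hι', n₁] at e
    exact hne e.symm
  have hl₂ : ∀ i, C.Γ.leg i ≠ h₂ := fun i e => n₂ (e ▸ C.Γ.leg_fix i)
  have hl₃ : ∀ i, C.Γ.leg i ≠ C.Γ.ι h₂ := fun i e => by
    have := C.Γ.leg_fix i
    rw [e, C.Γ.ι_invol] at this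
    exact n₂ this.symm
  -- The edge towards `h₂` survives as the leg, so the far half-edge `ι h₂` replaces `h₁`.
  let F : C'.Γ.H ⊕ Fin n → C.Γ.H ⊕ Fin n :=
    Sum.map (fun x => if fH x = h₁ then C.Γ.ι h₂ else fH x) id
  have F₁ : ∀ x, fH x = h₁ → F (.inl x) = .inl (C.Γ.ι h₂) := fun x hx => by simp [F, hx]
  have F₂ : ∀ x, fH x ≠ h₁ → F (.inl x) = .inl (fH x) := fun x hx => by simp [F, hx]
  have F₃ : ∀ i, F (.inr i) = .inr i := fun i => rfl
  have iF : Function.Injective F := by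
    refine Sum.map_injective.2 ⟨fun x y e => iH ?_, fun _ _ h => h⟩
    dsimp only at e
    split_ifs at e with hx hy hy
    · rw [hx, hy]
    · exact absurd e.symm (m₂ y)
    · exact absurd e (m₂ x)
    · exact e
  have hεF : ∀ x, Sum.map fV id (curveε C' x) = curveε C (F x) := by
    rintro (x | i)
    · by_cases hx : fH x = h₁
      · rw [F₁ x hx]
        exact congrArg Sum.inl ((Hx x).1 hx).2.1
      · rw [F₂ x hx]
        exact congrArg Sum.inl ((Hx x).2 hx).2.1
    · rfl
  refine curve_step hw (thin_two hv hne e₁ e₂) iV rV Hw iF ?_ hεF ?_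
  · intro a b l h
    rcases a with a | i
    · have ha := (ε_ne_iff C).1 h.1
      by_cases h2 : a = C.Γ.ι h₂
      · obtain ⟨x, hx⟩ := (hr h₁).2 ⟨hne, h12.symm⟩
        exact ⟨.inl x, by rw [F₁ x hx, h2]⟩
      · obtain ⟨x, rfl⟩ := (hr a).2 ⟨fun e => ha (e ▸ e₂), h2⟩
        exact ⟨.inl x, F₂ x fun e => ha (e ▸ e₁)⟩
    · exact ⟨.inr i, rfl⟩
  · intro a b l
    rw [elim_two hv hne e₁ e₂]
    have hn : ∀ x, curveε C (F x) ≠ Sum.inl v := by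
      intro x
      rw [← hεF]
      exact (rangeV_map rV _).1 ⟨_, rfl⟩
    have N₁ : ∀ x l, ¬ curveM C (.inl x) (.inl h₁) l := by
      rintro x l ⟨e, e', -⟩
      rw [hι', n₁] at e
      exact e' e
    have N₂ : ∀ x l, ¬ curveM C (.inl h₁) (.inl x) l := fun x l h => N₁ x l (curveM_symm C _ _ _ h)
    simp only [hn, ne_eq, not_false_eq_true, true_and]
    have hlegx : ∀ i x, C'.Γ.leg i = x ↔ C.Γ.leg i = fH x := fun i x => by
      rw [← Hleg, iH.eq_iff]
    rcases a with a | i <;> rcases b with b | j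
    · by_cases ha : fH a = h₁
      · rw [F₁ a ha]
        have : C'.Γ.ι a = a := iH (((Hx a).1 ha).1.trans ha.symm)
        by_cases hb : fH b = h₁
        · rw [F₁ b hb]
          simp only [N₁, N₂, false_and, and_false, exists_false, or_false]
          simp only [curveM, this, C.Γ.ι_invol, n₂.symm, false_and, iff_false]
          exact fun h => h.2.1 h.1
        · rw [F₂ b hb]
          simp only [N₁, N₂, false_and, and_false, exists_false, or_false]
          simp only [curveM, this, C.Γ.ι_invol, (m₁ b).symm, false_and, iff_false]
          exact fun h => h.2.1 h.1
      · have hιa := ((Hx a).2 ha).1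
        rw [F₂ a ha]
        by_cases hb : fH b = h₁
        · have e₃ : C'.Γ.ι a ≠ b := fun e => ha (by
            rw [e, hb] at hιa
            rw [← C.Γ.ι_invol (fH a), ← hιa, n₁])
          have e₄ : C.Γ.ι (fH a) ≠ C.Γ.ι h₂ := fun e => m₁ a (by rwa [hι', C.Γ.ι_invol] at e)
          rw [F₁ b hb]
          simp only [N₁, N₂, false_and, and_false, exists_false, or_false]
          simp [curveM, e₃, e₄]
        · rw [F₂ b hb]
          simp only [N₁, N₂, false_and, and_false, exists_false, or_false]
          simp [curveM, ← hιa, iH.eq_iff, ((Hx a).2 ha).2.2]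
    · by_cases ha : fH a = h₁
      · simp [F₁ a ha, F₃, curveM, hlegx, ha, hl₃, hl₂, h12, C.Γ.ι_invol, n₂]
      · have e₄ : C.Γ.ι (fH a) ≠ h₂ := fun e => m₂ a ((hι' _ _).1 e)
        simp [F₂ a ha, F₃, curveM, hlegx, e₄, hl₂]
    · by_cases hb : fH b = h₁
      · simp [F₁ b hb, F₃, curveM, hlegx, hb, hl₃, hl₂, n₂.symm]
      · have e₄ : C.Γ.ι h₂ ≠ fH b := (m₂ b).symm
        simp [F₂ b hb, F₃, curveM, hlegx, e₄, hl₂]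
    · simp [F₃, curveM, hl₂]


/-! ### Back to tropical curves -/

/-- An isomorphism of nets preserves tags, hence the ends at infinity and the half-edges there, so
it restricts to an isomorphism of the curves. -/
theorem iso_of_nIso {C C' : TropCurve g n} (h : NIso (curveNet C') (curveNet C)) :
    TropCurve.Iso C C' := by
  obtain ⟨f⟩ := h
  have hV : ∀ i, f.fV (.inr i) = .inr i := by
    intro i
    have := f.htag (.inr i)
    rcases h : f.fV (.inr i) with x | j
    · rw [h] at this; exact absurd this (by simp [curveNet])
    · rw [h] at this; exact congrArg _ (Sum.inr_injective this).symm
  have hV' : ∀ x, ∃ y, f.fV (.inl x) = .inl y := by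
    intro x
    have := f.htag (.inl x)
    rcases h : f.fV (.inl x) with y | j
    · exact ⟨y, rfl⟩
    · rw [h] at this; exact absurd this (by simp [curveNet])
  choose φ hφ using hV'
  have hH : ∀ i, f.fH (.inr i) = .inr i := by
    intro i
    have := f.hε (.inr i)
    change f.fV (.inr i) = _ at this
    rw [hV] at this
    rcases h : f.fH (.inr i) with x | j
    · rw [h] at this; exact absurd this (by simp [curveNet, curveε])
    · rw [h] at this; exact congrArg _ (Sum.inr_injective this).symm
  have hH' : ∀ x, ∃ y, f.fH (.inl x) = .inl y := by
    intro x
    have := f.hε (.inl x)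
    change f.fV (.inl _) = _ at this
    rw [hφ] at this
    rcases h : f.fH (.inl x) with y | j
    · exact ⟨y, rfl⟩
    · rw [h] at this; exact absurd this (by simp [curveNet, curveε])
  choose ψ hψ using hH'
  have bφ : Function.Bijective φ := by
    constructor
    · intro a b e
      exact Sum.inl_injective (f.injV (by rw [hφ, hφ, e]))
    · intro y
      obtain ⟨x | i, hx⟩ := (f.rangeV (.inl y)).2 trivial
      · exact ⟨x, Sum.inl_injective ((hφ x).symm.trans hx)⟩
      · exact absurd ((hV i).symm.trans hx) (by simp)
  have bψ : Function.Bijective ψ := by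
    constructor
    · intro a b e
      exact Sum.inl_injective (f.injH (by rw [hψ, hψ, e]))
    · intro y
      obtain ⟨b, l, hy⟩ := (curveNet C').alive (.inl y)
      obtain ⟨x | i, hx⟩ := f.surjH _ _ _ hy
      · exact ⟨x, Sum.inl_injective ((hψ x).symm.trans hx)⟩
      · exact absurd ((hH i).symm.trans hx) (by simp)
  have hleg : ∀ i, ψ (C.Γ.leg i) = C'.Γ.leg i := by
    intro i
    have := (f.hM (.inr i) (.inl (C.Γ.leg i)) ⊤).1 ⟨rfl, rfl⟩
    rw [hH, hψ] at this
    exact this.1.symm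
  have hM : ∀ a, C.Γ.ι a ≠ a → C'.Γ.ι (ψ a) = ψ (C.Γ.ι a) ∧ C.len a = C'.len (ψ a) := by
    intro a ha
    have := (f.hM (.inl a) (.inl (C.Γ.ι a)) (C.len a)).1 ⟨rfl, ha.symm, rfl⟩
    rw [hψ, hψ] at this
    exact ⟨this.1, this.2.2⟩
  refine ⟨Equiv.ofBijective φ bφ, Equiv.ofBijective ψ bψ, ?_, ?_, hleg, ?_, ?_⟩
  · intro a
    change ψ _ = C'.Γ.ι (ψ a)
    by_cases ha : C.Γ.ι a = a
    · obtain ⟨i, rfl⟩ := C.Γ.fix_leg a ha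
      rw [ha, hleg, C'.Γ.leg_fix]
    · exact (hM a ha).1.symm
  · intro a
    change φ (C.Γ.ε a) = C'.Γ.ε (ψ a)
    have := f.hε (.inl a)
    change f.fV (.inl _) = _ at this
    rw [hφ, hψ] at this
    exact Sum.inl_injective this
  · intro v
    change C'.w (φ v) = C.w v
    have := f.htag (.inl v)
    rw [hφ] at this
    exact (Sum.inl_injective this).symm
  · intro a
    change C'.len (ψ a) = C.len a
    by_cases ha : C.Γ.ι a = a
    · obtain ⟨i, rfl⟩ := C.Γ.fix_leg a ha
      rw [hleg, len_leg, len_leg]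
    · exact (hM a ha).2.symm

theorem step_of_elemMove {C C' : TropCurve g n} (h : ElemMove C C') :
    Step (curveNet C) (curveNet C') := by
  rcases h with h | h | h
  exacts [step_of_move1 h, step_of_move2a h, step_of_move2b h]

theorem eqvGen_step_of_tropEquiv {C C' : TropCurve g n} (h : TropEquiv C C') :
    Relation.EqvGen Step (curveNet C) (curveNet C') := by
  induction h with
  | rel _ _ h => exact .rel _ _ (step_of_elemMove h)
  | refl _ => exact .refl _
  | symm _ _ _ ih => exact .symm _ _ ih
  | trans _ _ _ _ _ h1 h2 => exact .trans _ _ _ h1 h2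

end TropNet

theorem stmt_9 (g n : ℕ) (hgn : 1 ≤ 2 * (g : ℤ) - 2 + n) (C C' : TropCurve g n)
    (hC : C.Γ.Stable C.w) (hC' : C'.Γ.Stable C'.w) (h : TropCurve.TropEquiv C C') :
    TropCurve.Iso C C' := by
  exact TropNet.iso_of_nIso (TropNet.iso_of_eqvGen (TropNet.not_step_of_stable hC)
    (TropNet.not_step_of_stable hC') (TropNet.eqvGen_step_of_tropEquiv h)).symm
end
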